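/- arXiv:2208.09690 — 5 statements merged into one kernel-verified Lean document; each statement's English description precedes it below -/
import Mathlib

section
/- (Theorem 3.1, second equality.) Under Assumption A, the λ-minimization can be moved outside: inf_{x∈X} sup{ f(x,y) : y ∈ Y, g(x,y) ≥ 0 } = inf{ inf_{x∈X} sup_{y∈Y} L(x,y,λ) : λ ∈ ℝ^K, λ ≥ 0 }. -/
/-!
For each fixed `x` the inner problem is a concave maximization satisfying Slater's condition, so
its value is the minimum over `λ ≥ 0` of `sup_{y ∈ Y} L(x, y, λ)`. The theorem is this strong
duality followed by an exchange of the two infima over `x` and `λ`.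

The multiplier comes from separating `0` from the set of vectors dominated by some
`(f y - p, g₁ y, …, g_K y)`, where `p` is the optimal value: a separating functional is nonnegative,
and Slater's condition makes its coefficient on `f y - p` positive, so it can be normalized to `1`.
-/

open Set
open scoped Matrix Topology

section Infimum

variable {α β γ : Type*} [ConditionallyCompleteLattice γ] {F : α → β → γ} {S : Set α}
  {T : Set β}

theorem isGLB_image2_csInf_image_csInf_image (hS : S.Nonempty) (hT : T.Nonempty)
    (hF : BddBelow (image2 F S T)) :
    IsGLB (image2 F S T) (sInf ((fun a => sInf ((fun b => F a b) '' T)) '' S)) := by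
  have hrow (a : α) (ha : a ∈ S) : IsGLB (F a '' T) (sInf (F a '' T)) :=
    isGLB_csInf (hT.image _) (hF.mono (image_subset_image2_right ha))
  have hrows : BddBelow ((fun a => sInf (F a '' T)) '' S) := by
    obtain ⟨c, hc⟩ := hF
    exact ⟨c, forall_mem_image.mpr fun a ha => (hrow a ha).2 fun _ hv =>
      hc (image_subset_image2_right ha hv)⟩
  refine ⟨forall_mem_image2.mpr fun a ha b hb => ?_, fun c hc => ?_⟩
  · exact (csInf_le hrows (mem_image_of_mem _ ha)).trans ((hrow a ha).1 (mem_image_of_mem _ hb))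
  · exact le_csInf (hS.image _) (forall_mem_image.mpr fun a ha => (hrow a ha).2 fun _ hv =>
      hc (image_subset_image2_right ha hv))

theorem csInf_image_csInf_image_comm (hS : S.Nonempty) (hT : T.Nonempty)
    (hF : BddBelow (image2 F S T)) :
    sInf ((fun a => sInf ((fun b => F a b) '' T)) '' S) =
      sInf ((fun b => sInf ((fun a => F a b) '' S)) '' T) := by
  refine (isGLB_image2_csInf_image_csInf_image hS hT hF).unique ?_
  rw [image2_swap F S T] at hF ⊢
  exact isGLB_image2_csInf_image_csInf_image hT hS hF

end Infimum

section Alternative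

theorem convex_lowerClosure_image_of_concaveOn {𝕜 E β : Type*} [Semiring 𝕜] [PartialOrder 𝕜]
    [AddCommMonoid E] [AddCommMonoid β] [PartialOrder β] [IsOrderedAddMonoid β]
    [Module 𝕜 E] [Module 𝕜 β] [PosSMulMono 𝕜 β] {s : Set E} {f : E → β} (hf : ConcaveOn 𝕜 s f) :
    Convex 𝕜 (lowerClosure (f '' s) : Set β) := by
  have hproj : (lowerClosure (f '' s) : Set β) =
      LinearMap.snd 𝕜 E β '' {p | p.1 ∈ s ∧ p.2 ≤ f p.1} := by
    ext b
    simp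
  exact hproj ▸ hf.convex_hypograph.linear_image _

theorem exists_mem_forall_lt_of_mem_interior {ι : Type*} {A : Set (ι → ℝ)} {a : ι → ℝ}
    (ha : a ∈ interior A) : ∃ b ∈ A, ∀ i, a i < b i := by
  have hcont : Continuous fun t : ℝ => fun i => a i + t := by fun_prop
  have hnhds : ∀ᶠ t in 𝓝 (0 : ℝ), (fun i => a i + t) ∈ A :=
    hcont.continuousAt.eventually_mem (by simpa using mem_interior_iff_mem_nhds.mp ha)
  obtain ⟨t, htA, ht⟩ := ((hnhds.filter_mono nhdsWithin_le_nhds).and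
    (eventually_mem_nhdsWithin : ∀ᶠ t in 𝓝[>] (0 : ℝ), t ∈ Ioi 0)).exists
  exact ⟨_, htA, fun i => lt_add_of_pos_right _ ht⟩

theorem map_nonneg_of_isLowerSet_of_forall_map_le {β γ : Type*} [AddCommGroup β] [PartialOrder β]
    [IsOrderedAddMonoid β] [AddCommGroup γ] [LinearOrder γ] [IsOrderedAddMonoid γ] [Archimedean γ]
    {A : Set β} {φ : β →+ γ} {c : γ} (hA : IsLowerSet A) (hne : A.Nonempty)
    (hφ : ∀ a ∈ A, φ a ≤ c) {v : β} (hv : 0 ≤ v) : 0 ≤ φ v := by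
  obtain ⟨a, ha⟩ := hne
  by_contra! hneg
  obtain ⟨n, hn⟩ := exists_lt_nsmul (neg_pos.mpr hneg) (c - φ a)
  have hmem : a - n • v ∈ A := hA (sub_le_self a (nsmul_nonneg hv n)) ha
  have hle : n • -φ v ≤ c - φ a := by
    simpa [le_sub_iff_add_le', add_comm] using hφ _ hmem
  exact hn.not_ge hle

/-- The Fan–Glicksberg–Hoffman theorem of the alternative. -/
theorem exists_nonneg_ne_zero_forall_dotProduct_nonpos_of_concaveOn {E ι : Type*}
    [AddCommMonoid E] [Module ℝ E] [Fintype ι] {Y : Set E} {H : E → ι → ℝ}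
    (hH : ConcaveOn ℝ Y H) (hY : Y.Nonempty) (hpos : ¬ ∃ y ∈ Y, ∀ i, 0 < H y i) :
    ∃ w : ι → ℝ, 0 ≤ w ∧ w ≠ 0 ∧ ∀ y ∈ Y, w ⬝ᵥ H y ≤ 0 := by
  classical
  let A : LowerSet (ι → ℝ) := lowerClosure (H '' Y)
  have hHA : ∀ y ∈ Y, H y ∈ A := fun y hy => subset_lowerClosure (mem_image_of_mem H hy)
  have hA_ne : (A : Set (ι → ℝ)).Nonempty := (hY.image H).mono subset_lowerClosure
  have hint : (interior (A : Set (ι → ℝ))).Nonempty := by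
    obtain ⟨a, ha⟩ := hA_ne
    exact ⟨a - 1, A.lower.mem_interior_of_forall_lt (subset_closure ha) fun i => by simp⟩
  have hzero : (0 : ι → ℝ) ∉ interior (A : Set (ι → ℝ)) := by
    intro h0
    obtain ⟨b, ⟨-, ⟨y, hy, rfl⟩, hby⟩, hb⟩ := exists_mem_forall_lt_of_mem_interior h0
    exact hpos ⟨y, hy, fun i => (hb i).trans_le (hby i)⟩
  obtain ⟨φ, hφ_ne, hφ⟩ := geometric_hahn_banach_of_nonempty_interior_point
    (convex_lowerClosure_image_of_concaveOn hH) hzero hint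
  obtain ⟨w, hw⟩ := (dotProductEquiv ℝ ι).surjective φ.toLinearMap
  have hw_apply (v : ι → ℝ) : w ⬝ᵥ v = φ v := DFunLike.congr_fun hw v
  have hφ_nonpos : ∀ a ∈ A, φ a ≤ 0 := fun a ha => by simpa using hφ a ha
  have hφ_nonneg {v : ι → ℝ} (hv : 0 ≤ v) : 0 ≤ φ v :=
    map_nonneg_of_isLowerSet_of_forall_map_le (φ := (φ : (ι → ℝ) →+ ℝ)) A.lower hA_ne hφ_nonpos hv
  refine ⟨w, fun i => ?_, ?_, fun y hy => (hw_apply _).trans_le (hφ_nonpos _ (hHA y hy))⟩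
  · rw [Pi.zero_apply, ← dotProduct_single_one w i, hw_apply]
    exact hφ_nonneg (Pi.single_nonneg.mpr zero_le_one)
  · rintro rfl
    exact hφ_ne (ContinuousLinearMap.ext fun v => by simp [← hw_apply])

end Alternative

section Duality

variable {E ι : Type*}

/-- The feasible set of the problem of maximizing over `Y` under the constraints `g k y ≥ 0`. -/
def feasibleSet (Y : Set E) (g : ι → E → ℝ) : Set E :=
  {y ∈ Y | ∀ k, 0 ≤ g k y}

/-- The optimal value of the problem of maximizing `f` over `feasibleSet Y g`. As a real supremum it
is meaningful only if the problem is feasible and bounded. -/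
noncomputable def primalValue (Y : Set E) (f : E → ℝ) (g : ι → E → ℝ) : ℝ :=
  sSup (f '' feasibleSet Y g)

variable {Y : Set E} {f : E → ℝ} {g : ι → E → ℝ}

theorem feasibleSet_nonempty_of_slater (slater : ∃ y ∈ Y, ∀ k, 0 < g k y) :
    (feasibleSet Y g).Nonempty :=
  slater.imp fun _ hy => ⟨hy.1, fun k => (hy.2 k).le⟩

theorem le_primalValue {y : E} (hf : BddAbove (f '' Y)) (hy : y ∈ feasibleSet Y g) :
    f y ≤ primalValue Y f g :=
  le_csSup (hf.mono (image_mono (sep_subset _ _))) (mem_image_of_mem f hy)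

variable [Fintype ι]

/-- The Lagrangian `f + ∑ k, lam k * g k` of the problem of maximizing `f` subject to `g k ≥ 0`. -/
def lagrangian (f : E → ℝ) (g : ι → E → ℝ) (lam : ι → ℝ) (y : E) : ℝ :=
  f y + ∑ k, lam k * g k y

/-- The Lagrange dual function `lam ↦ sup_{y ∈ Y} L(y, lam)`. As a real supremum it is meaningful
only if the Lagrangian is bounded above on `Y`. -/
noncomputable def dualFunction (Y : Set E) (f : E → ℝ) (g : ι → E → ℝ) (lam : ι → ℝ) : ℝ :=
  sSup (lagrangian f g lam '' Y)

variable {lam : ι → ℝ}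

theorem le_lagrangian_of_mem_feasibleSet (hlam : 0 ≤ lam) {y : E} (hy : y ∈ feasibleSet Y g) :
    f y ≤ lagrangian f g lam y :=
  le_add_of_nonneg_right (Finset.sum_nonneg fun k _ => mul_nonneg (hlam k) (hy.2 k))

theorem bddAbove_lagrangian_image (hf : BddAbove (f '' Y)) (hg : ∀ k, BddAbove (g k '' Y))
    (hlam : 0 ≤ lam) : BddAbove (lagrangian f g lam '' Y) := by
  obtain ⟨c, hc⟩ := hf
  choose d hd using hg
  refine ⟨c + ∑ k, lam k * d k, forall_mem_image.mpr fun y hy => ?_⟩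
  exact add_le_add (hc (mem_image_of_mem f hy)) (Finset.sum_le_sum fun k _ =>
    mul_le_mul_of_nonneg_left (hd k (mem_image_of_mem (g k) hy)) (hlam k))

theorem primalValue_le_dualFunction (hfeas : (feasibleSet Y g).Nonempty)
    (hL : BddAbove (lagrangian f g lam '' Y)) (hlam : 0 ≤ lam) :
    primalValue Y f g ≤ dualFunction Y f g lam := by
  refine csSup_le (hfeas.image f) (forall_mem_image.mpr fun y hy => ?_)
  exact (le_lagrangian_of_mem_feasibleSet hlam hy).trans
    (le_csSup hL (mem_image_of_mem _ hy.1))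

variable [AddCommMonoid E] [Module ℝ E]

theorem exists_fritzJohn_multipliers_of_forall_feasibleSet_le {p : ℝ} (hY : Y.Nonempty)
    (hf : ConcaveOn ℝ Y f) (hg : ∀ k, ConcaveOn ℝ Y (g k)) (hp : ∀ y ∈ feasibleSet Y g, f y ≤ p) :
    ∃ (w₀ : ℝ) (w : ι → ℝ), 0 ≤ w₀ ∧ 0 ≤ w ∧ (w₀ ≠ 0 ∨ w ≠ 0) ∧
      ∀ y ∈ Y, w₀ * (f y - p) + ∑ k, w k * g k y ≤ 0 := by
  let H (y : E) (o : Option ι) : ℝ := o.elim (f y - p) (g · y)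
  have hH : ConcaveOn ℝ Y H := by
    refine ⟨hf.1, fun y hy z hz a b ha hb hab o => ?_⟩
    cases o with
    | none => exact (hf.sub (convexOn_const p hf.1)).2 hy hz ha hb hab
    | some k => exact (hg k).2 hy hz ha hb hab
  have hpos : ¬ ∃ y ∈ Y, ∀ o, 0 < H y o := fun ⟨y, hy, hHy⟩ =>
    (hp y ⟨hy, fun k => (hHy (some k)).le⟩).not_gt (sub_pos.mp (hHy none))
  obtain ⟨w, hw, hw_ne, hwH⟩ :=
    exists_nonneg_ne_zero_forall_dotProduct_nonpos_of_concaveOn hH hY hpos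
  refine ⟨w none, fun k => w (some k), hw none, fun k => hw (some k), ?_, fun y hy => ?_⟩
  · contrapose! hw_ne
    exact funext (Option.forall.mpr ⟨hw_ne.1, congr_fun hw_ne.2⟩)
  · simpa only [dotProduct, Fintype.sum_option, H, Option.elim] using hwH y hy

theorem exists_multipliers_of_forall_feasibleSet_le {p : ℝ} (hf : ConcaveOn ℝ Y f)
    (hg : ∀ k, ConcaveOn ℝ Y (g k)) (slater : ∃ y ∈ Y, ∀ k, 0 < g k y)
    (hp : ∀ y ∈ feasibleSet Y g, f y ≤ p) :
    ∃ lam : ι → ℝ, 0 ≤ lam ∧ ∀ y ∈ Y, lagrangian f g lam y ≤ p := by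
  obtain ⟨y₀, hy₀, hgy₀⟩ := slater
  obtain ⟨w₀, w, hw₀, hw, hw_ne, hle⟩ :=
    exists_fritzJohn_multipliers_of_forall_feasibleSet_le ⟨y₀, hy₀⟩ hf hg hp
  have hw₀_pos : 0 < w₀ := by
    refine hw₀.lt_of_ne' fun h0 => hw_ne.elim (· h0) fun hw_ne => ?_
    have hterm (k : ι) : 0 ≤ w k * g k y₀ := mul_nonneg (hw k) (hgy₀ k).le
    have hsum : ∑ k, w k * g k y₀ = 0 :=
      le_antisymm (by simpa [h0] using hle y₀ hy₀) (Finset.sum_nonneg fun k _ => hterm k)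
    rw [Fintype.sum_eq_zero_iff_of_nonneg hterm] at hsum
    exact hw_ne (funext fun k => (mul_eq_zero.mp (congr_fun hsum k)).resolve_right (hgy₀ k).ne')
  refine ⟨fun k => w k / w₀, fun k => div_nonneg (hw k) hw₀, fun y hy => ?_⟩
  have hnormalize : ∑ k, w k / w₀ * g k y = (∑ k, w k * g k y) / w₀ := by
    simp only [Finset.sum_div, div_mul_eq_mul_div]
  have hdiv : (∑ k, w k * g k y) / w₀ ≤ p - f y :=
    (div_le_iff₀ hw₀_pos).mpr (by linarith [hle y hy])
  rw [lagrangian, hnormalize]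
  linarith

theorem isLeast_dualFunction_image_primalValue (hf : ConcaveOn ℝ Y f)
    (hg : ∀ k, ConcaveOn ℝ Y (g k)) (slater : ∃ y ∈ Y, ∀ k, 0 < g k y)
    (hf_bdd : BddAbove (f '' Y)) (hg_bdd : ∀ k, BddAbove (g k '' Y)) :
    IsLeast (dualFunction Y f g '' Ici 0) (primalValue Y f g) := by
  have hfeas : (feasibleSet Y g).Nonempty := feasibleSet_nonempty_of_slater slater
  have hweak : ∀ lam ∈ Ici (0 : ι → ℝ), primalValue Y f g ≤ dualFunction Y f g lam :=
    fun lam hlam =>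
      primalValue_le_dualFunction hfeas (bddAbove_lagrangian_image hf_bdd hg_bdd hlam) hlam
  obtain ⟨lam, hlam, hle⟩ := exists_multipliers_of_forall_feasibleSet_le hf hg slater
    fun y hy => le_primalValue hf_bdd hy
  refine ⟨⟨lam, hlam, le_antisymm ?_ (hweak lam hlam)⟩, forall_mem_image.mpr hweak⟩
  exact csSup_le ((hfeas.mono (sep_subset _ _)).image _) (forall_mem_image.mpr hle)

end Duality

theorem bddBelow_primalValue_image {α E ι : Type*} {X : Set α} {Y : Set E} {f : α → E → ℝ}
    {g : ι → α → E → ℝ} (hfeas : ∀ x ∈ X, (feasibleSet Y (g · x)).Nonempty)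
    (hf_above : ∀ x ∈ X, BddAbove (f x '' Y))
    (hf_below : BddBelow ((fun p : α × E => f p.1 p.2) '' X ×ˢ Y)) :
    BddBelow ((fun x => primalValue Y (f x) (g · x)) '' X) := by
  obtain ⟨c, hc⟩ := hf_below
  refine ⟨c, forall_mem_image.mpr fun x hx => ?_⟩
  obtain ⟨y, hy⟩ := hfeas x hx
  exact (hc ⟨(x, y), ⟨hx, hy.1⟩, rfl⟩).trans (le_primalValue (hf_above x hx) hy)

theorem minmax_stackelberg_eq_min_lambda_outside_general {α E ι : Type*} [AddCommMonoid E]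
    [Module ℝ E] [Fintype ι] {X : Set α} {Y : Set E} {f : α → E → ℝ} {g : ι → α → E → ℝ}
    (hX : X.Nonempty) (hf : ∀ x ∈ X, ConcaveOn ℝ Y (f x))
    (hg : ∀ k, ∀ x ∈ X, ConcaveOn ℝ Y (g k x))
    (slater : ∀ x ∈ X, ∃ y ∈ Y, ∀ k, 0 < g k x y)
    (hf_bdd : ∀ x ∈ X, BddAbove (f x '' Y)) (hg_bdd : ∀ k, ∀ x ∈ X, BddAbove (g k x '' Y))
    (hprimal : BddBelow ((fun x => primalValue Y (f x) (g · x)) '' X)) :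
    sInf ((fun x => primalValue Y (f x) (g · x)) '' X) =
      sInf ((fun lam => sInf ((fun x => dualFunction Y (f x) (g · x) lam) '' X)) '' Ici 0) := by
  have hduality (x : α) (hx : x ∈ X) :
      IsLeast (dualFunction Y (f x) (g · x) '' Ici 0) (primalValue Y (f x) (g · x)) :=
    isLeast_dualFunction_image_primalValue (hf x hx) (hg · x hx) (slater x hx) (hf_bdd x hx)
      (hg_bdd · x hx)
  have hdual : BddBelow (image2 (fun x => dualFunction Y (f x) (g · x)) X (Ici 0)) := by
    obtain ⟨c, hc⟩ := hprimal
    refine ⟨c, forall_mem_image2.mpr fun x hx lam hlam => ?_⟩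
    exact (hc (mem_image_of_mem _ hx)).trans ((hduality x hx).2 (mem_image_of_mem _ hlam))
  calc sInf ((fun x => primalValue Y (f x) (g · x)) '' X)
    _ = sInf ((fun x => sInf ((fun lam => dualFunction Y (f x) (g · x) lam) '' Ici 0)) '' X) := by
      rw [image_congr fun x hx => (hduality x hx).csInf_eq.symm]
    _ = sInf ((fun lam => sInf ((fun x => dualFunction Y (f x) (g · x) lam) '' X)) '' Ici 0) :=
      csInf_image_csInf_image_comm hX nonempty_Ici hdual

theorem setOf_exists_and_eq_image {α β : Type*} (p : α → Prop) (f : α → β) :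
    {b | ∃ a, p a ∧ b = f a} = f '' {a | p a} := by
  ext b
  simp [eq_comm]

/-- **Theorem 3.1, second equality.**  Under Assumption A (Slater's condition plus
convexity in `x` and concavity in `y` of `f` and each `g k`), the λ-minimization can be
moved outside:
`inf_{x∈X} sup {f x y : y ∈ Y, g x y ≥ 0}
  = inf_{λ ≥ 0} inf_{x∈X} sup_{y∈Y} (f x y + ∑ k, λ k * g k x y)`. -/
theorem minmax_stackelberg_eq_min_lambda_outside {n m K : ℕ}
    (X : Set (EuclideanSpace ℝ (Fin n))) (Y : Set (EuclideanSpace ℝ (Fin m)))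
    (hXne : X.Nonempty) (hXcomp : IsCompact X) (hXconv : Convex ℝ X)
    (hYne : Y.Nonempty) (hYcomp : IsCompact Y) (hYconv : Convex ℝ Y)
    (f : EuclideanSpace ℝ (Fin n) → EuclideanSpace ℝ (Fin m) → ℝ)
    (g : Fin K → EuclideanSpace ℝ (Fin n) → EuclideanSpace ℝ (Fin m) → ℝ)
    (hf_cont : ContinuousOn (fun p : EuclideanSpace ℝ (Fin n) × EuclideanSpace ℝ (Fin m) =>
      f p.1 p.2) (X ×ˢ Y))
    (hg_cont : ∀ k, ContinuousOn (fun p : EuclideanSpace ℝ (Fin n) × EuclideanSpace ℝ (Fin m) =>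
      g k p.1 p.2) (X ×ˢ Y))
    (slater : ∀ x ∈ X, ∃ yhat ∈ Y, ∀ k, 0 < g k x yhat)
    (hf_convx : ∀ y ∈ Y, ConvexOn ℝ X (fun x => f x y))
    (hf_concy : ∀ x ∈ X, ConcaveOn ℝ Y (fun y => f x y))
    (hg_convx : ∀ k, ∀ y ∈ Y, ConvexOn ℝ X (fun x => g k x y))
    (hg_concy : ∀ k, ∀ x ∈ X, ConcaveOn ℝ Y (fun y => g k x y)) :
    sInf {v : ℝ | ∃ x ∈ X, v = sSup {w : ℝ | ∃ y ∈ Y, (∀ k, 0 ≤ g k x y) ∧ w = f x y}}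
      = sInf {v : ℝ | ∃ lam : Fin K → ℝ, (∀ k, 0 ≤ lam k) ∧
          v = sInf {w : ℝ | ∃ x ∈ X, w = sSup {u : ℝ | ∃ y ∈ Y,
            u = f x y + ∑ k, lam k * g k x y}}} := by
  have hf_bdd (x) (hx : x ∈ X) : BddAbove (f x '' Y) :=
    hYcomp.bddAbove_image (hf_cont.uncurry_left x hx)
  have hg_bdd (k) (x) (hx : x ∈ X) : BddAbove (g k x '' Y) :=
    hYcomp.bddAbove_image ((hg_cont k).uncurry_left x hx)
  have hprimal := bddBelow_primalValue_image
    (fun x hx => feasibleSet_nonempty_of_slater (slater x hx)) hf_bdd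
    ((hXcomp.prod hYcomp).bddBelow_image hf_cont)
  simp only [← and_assoc, setOf_exists_and_eq_image]
  exact minmax_stackelberg_eq_min_lambda_outside_general hXne hf_concy hg_concy slater
    hf_bdd hg_bdd hprimal
end

section
/- (Theorem 4.3, closed-form optimal KKT multipliers for homogeneous log objectives.) Fix x ∈ ℝ^n. Let f₂ : ℝ^n × ℝ^m → ℝ, f₃ : ℝ^m → ℝ and g_i : ℝ^m × ℝ^n → ℝ (i = 1,…,n) be differentiable in y with y ↦ f₂(x,y), f₃ and y ↦ g_i(y,x) positively homogeneous of degree one (e.g. f₂(x, k·y) = k·f₂(x,y) for all k > 0). Let a, b, c ∈ ℝ^n with c_i ≠ 0 for all i. Suppose Y* = (y₁*,…,y_n*) ∈ (ℝ^m)^n and λ* ∈ ℝ^n satisfy, for every i and every coordinate j, the first-order stationarity condition (a_i / f₂(x, y_i*))·∂f₂/∂y_j(x, y_i*) + (b_i / f₃(y_i*))·∂f₃/∂y_j(y_i*) − λ_i*·∂g_i/∂y_j(y_i*, x) = 0 (with f₂(x, y_i*) ≠ 0 and f₃(y_i*) ≠ 0), together with complementary slackness λ_i*·g_i(y_i*,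 x) = λ_i*·c_i. Then λ_i* = (a_i + b_i)/c_i for all i. -/
/-!
Differentiating `f (k • y) = k ^ p • f y` at `k = 1` gives Euler's identity
`fderiv ℝ f y y = p • f y`. Pairing the stationarity condition with `y` itself therefore turns each
logarithmic term `a • ∇ log f` into the constant `p * a`, whatever `f y` is, and turns the
constraint term into `r * lam * g y`, which complementary slackness replaces by `r * lam * c`.
-/

theorem piLp_clm_ext_single {ι 𝕜 G : Type*} {p : ENNReal} [Finite ι] [DecidableEq ι] [Ring 𝕜]
    [TopologicalSpace 𝕜] [AddCommMonoid G] [TopologicalSpace G] [Module 𝕜 G]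
    {L L' : PiLp p (fun _ : ι => 𝕜) →L[𝕜] G}
    (h : ∀ j, L (PiLp.single p j 1) = L' (PiLp.single p j 1)) : L = L' :=
  ContinuousLinearMap.coe_injective <| (PiLp.basisFun p 𝕜 ι).ext fun j => by simpa using h j

section Homogeneous

variable {E F : Type*} [NormedAddCommGroup E] [NormedSpace ℝ E] [NormedAddCommGroup F]
  [NormedSpace ℝ F] {y : E}

theorem fderiv_apply_self_of_posHomogeneous {p : ℝ} {f : E → F} (hf : DifferentiableAt ℝ f y)
    (hom : ∀ k : ℝ, 0 < k → f (k • y) = k ^ p • f y) : fderiv ℝ f y y = p • f y := by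
  have along_ray : HasDerivAt (fun k : ℝ => f (k • y)) (fderiv ℝ f y y) 1 := by
    have ray : HasDerivAt (fun k : ℝ => k • y) y 1 := by
      simpa using (hasDerivAt_id (1 : ℝ)).smul_const y
    exact HasFDerivAt.comp_hasDerivAt 1 (by simpa using hf.hasFDerivAt) ray
  have power : HasDerivAt (fun k : ℝ => k ^ p • f y) (p • f y) 1 := by
    simpa using (Real.hasDerivAt_rpow_const (.inl one_ne_zero)).smul_const (f y)
  refine along_ray.unique (power.congr_of_eventuallyEq ?_)
  filter_upwards [lt_mem_nhds one_pos] with k hk using hom k hk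

theorem div_mul_fderiv_apply_self_of_posHomogeneous {p : ℝ} {f : E → ℝ}
    (hf : DifferentiableAt ℝ f y) (hom : ∀ k : ℝ, 0 < k → f (k • y) = k ^ p * f y)
    (hy : f y ≠ 0) (a : ℝ) : a / f y * fderiv ℝ f y y = p * a := by
  rw [fderiv_apply_self_of_posHomogeneous hf hom, smul_eq_mul, mul_left_comm, div_mul_cancel₀ a hy]

theorem kkt_multipliers_closed_form_general {f₂ f₃ g : E → ℝ} {p q r a b c lam : ℝ}
    (hf₂ : DifferentiableAt ℝ f₂ y) (hf₃ : DifferentiableAt ℝ f₃ y) (hg : DifferentiableAt ℝ g y)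
    (hom_f₂ : ∀ k : ℝ, 0 < k → f₂ (k • y) = k ^ p * f₂ y)
    (hom_f₃ : ∀ k : ℝ, 0 < k → f₃ (k • y) = k ^ q * f₃ y)
    (hom_g : ∀ k : ℝ, 0 < k → g (k • y) = k ^ r * g y)
    (hr : r ≠ 0) (hc : c ≠ 0) (hf₂_ne : f₂ y ≠ 0) (hf₃_ne : f₃ y ≠ 0)
    (stationary : (a / f₂ y) • fderiv ℝ f₂ y + (b / f₃ y) • fderiv ℝ f₃ y
      - lam • fderiv ℝ g y = 0)
    (slack : lam * g y = lam * c) : lam = (p * a + q * b) / (r * c) := by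
  have radial : a / f₂ y * fderiv ℝ f₂ y y + b / f₃ y * fderiv ℝ f₃ y y
      = lam * fderiv ℝ g y y := by
    simpa [sub_eq_zero] using DFunLike.congr_fun stationary y
  rw [eq_div_iff (mul_ne_zero hr hc)]
  calc lam * (r * c) = r * (lam * g y) := by rw [slack, mul_left_comm]
    _ = lam * fderiv ℝ g y y := by
      rw [fderiv_apply_self_of_posHomogeneous hg hom_g, smul_eq_mul, mul_left_comm]
    _ = a / f₂ y * fderiv ℝ f₂ y y + b / f₃ y * fderiv ℝ f₃ y y := radial.symm
    _ = p * a + q * b := by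
      rw [div_mul_fderiv_apply_self_of_posHomogeneous hf₂ hom_f₂ hf₂_ne,
        div_mul_fderiv_apply_self_of_posHomogeneous hf₃ hom_f₃ hf₃_ne]

end Homogeneous

/-- **Theorem 4.3: closed-form optimal KKT multipliers for homogeneous log objectives.**
Fix `x ∈ ℝ^n`.  With `f₂(x, ·)`, `f₃`, and `g_i(·, x)` differentiable and positively
homogeneous of degree one, if `(Y*, λ*)` satisfies the first-order stationarity
conditions coordinatewise together with complementary slackness
`λ_i* g_i(y_i*, x) = λ_i* c_i`, then `λ_i* = (a_i + b_i)/c_i` for all `i`. -/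
theorem kkt_multipliers_closed_form {n m : ℕ}
    (x : EuclideanSpace ℝ (Fin n))
    (f2 : EuclideanSpace ℝ (Fin n) → EuclideanSpace ℝ (Fin m) → ℝ)
    (f3 : EuclideanSpace ℝ (Fin m) → ℝ)
    (g : Fin n → EuclideanSpace ℝ (Fin m) → EuclideanSpace ℝ (Fin n) → ℝ)
    (hf2_diff : Differentiable ℝ (f2 x))
    (hf3_diff : Differentiable ℝ f3)
    (hg_diff : ∀ i, Differentiable ℝ (fun y => g i y x))
    (hf2_hom : ∀ k : ℝ, 0 < k → ∀ y, f2 x (k • y) = k * f2 x y)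
    (hf3_hom : ∀ k : ℝ, 0 < k → ∀ y, f3 (k • y) = k * f3 y)
    (hg_hom : ∀ i, ∀ k : ℝ, 0 < k → ∀ y, g i (k • y) x = k * g i y x)
    (a b c : Fin n → ℝ) (hc : ∀ i, c i ≠ 0)
    (Ystar : Fin n → EuclideanSpace ℝ (Fin m)) (lam : Fin n → ℝ)
    (hf2_ne : ∀ i, f2 x (Ystar i) ≠ 0) (hf3_ne : ∀ i, f3 (Ystar i) ≠ 0)
    (hstat : ∀ i, ∀ j : Fin m,
      (a i / f2 x (Ystar i)) * fderiv ℝ (f2 x) (Ystar i) (EuclideanSpace.single j 1)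
        + (b i / f3 (Ystar i)) * fderiv ℝ f3 (Ystar i) (EuclideanSpace.single j 1)
        - lam i * fderiv ℝ (fun y => g i y x) (Ystar i) (EuclideanSpace.single j 1) = 0)
    (hcs : ∀ i, lam i * g i (Ystar i) x = lam i * c i) :
    ∀ i, lam i = (a i + b i) / c i := by
  intro i
  simpa using kkt_multipliers_closed_form_general (p := 1) (q := 1) (r := 1)
    (hf2_diff _) (hf3_diff _) (hg_diff i _)
    (by simpa using (hf2_hom · · (Ystar i))) (by simpa using (hf3_hom · · (Ystar i)))
    (by simpa using (hg_hom i · · (Ystar i))) one_ne_zero (hc i) (hf2_ne i) (hf3_ne i)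
    (piLp_clm_ext_single fun j => by simpa using hstat i j) (hcs i)
end

section
/- (Corollary 5.1, optimal KKT multipliers for the Fisher market program are all one.) Consider a Fisher market with n buyers and m goods, budgets b ∈ ℝ^n with b_i > 0, prices p ∈ ℝ^m with p ≥ 0, and utility functions u_i : ℝ^m → ℝ that are differentiable and positively homogeneous of degree one (u_i(k·z) = k·u_i(z) for all k > 0). Suppose allocations X* = (x₁*,…,x_n*) ∈ (ℝ^m)^n and multipliers λ* ∈ ℝ^n satisfy, for every buyer i and every good j, the stationarity condition (b_i / u_i(x_i*))·∂u_i/∂x_j(x_i*) = λ_i*·p_j (with u_i(x_i*) ≠ 0), together with complementary slackness λ_i*·(b_i − x_i*·p) = 0. Then λ_i* = 1 for all i. -/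
/-!
By Euler's identity, a utility `u` homogeneous of degree `d` satisfies `u'(x) x = d * u x`, so
evaluating the stationarity condition `(b / u x) • u'(x) = lam • p` at `x` itself gives
`d * b = lam * p(x)`. Complementary slackness says `lam * p(x) = lam * b`, hence `lam = d`.
-/

open Topology

section Homogeneous

variable {E F : Type*} [NormedAddCommGroup E] [NormedSpace ℝ E] [NormedAddCommGroup F]
  [NormedSpace ℝ F]

theorem hasFDerivAt_apply_self_of_homogeneous {f : E → F} {f' : E →L[ℝ] F} {x : E} {d : ℝ}
    (hf : HasFDerivAt f f' x) (hom : ∀ᶠ k : ℝ in 𝓝 1, f (k • x) = k ^ d • f x) :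
    f' x = d • f x := by
  have deriv_ray : HasDerivAt (fun k : ℝ ↦ f (k • x)) (f' x) 1 := by
    have ray : HasDerivAt (fun k : ℝ ↦ k • x) x 1 := by
      simpa using (hasDerivAt_id (1 : ℝ)).smul_const x
    exact hf.comp_hasDerivAt_of_eq 1 ray (one_smul ℝ x).symm
  have deriv_pow : HasDerivAt (fun k : ℝ ↦ k ^ d • f x) (d • f x) 1 := by
    simpa using (Real.hasDerivAt_rpow_const (.inl one_ne_zero)).smul_const (f x)
  exact deriv_ray.unique (deriv_pow.congr_of_eventuallyEq hom)

theorem fisher_market_kkt_multipliers_eq_one_general {b d lam : ℝ} (hb : b ≠ 0)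
    {p u' : E →L[ℝ] ℝ} {u : E → ℝ} {x : E}
    (hu : HasFDerivAt u u' x) (hom : ∀ᶠ k : ℝ in 𝓝 1, u (k • x) = k ^ d * u x)
    (hux : u x ≠ 0) (stationarity : (b / u x) • u' = lam • p)
    (slackness : lam * (b - p x) = 0) : lam = d := by
  have euler : u' x = d * u x := hasFDerivAt_apply_self_of_homogeneous hu hom
  have spending : lam * p x = d * b :=
    calc lam * p x = b / u x * u' x := (DFunLike.congr_fun stationarity x).symm
      _ = d * b := by rw [euler]; field_simp
  refine mul_right_cancel₀ hb ?_
  linarith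

end Homogeneous

/-- **Corollary 5.1: the optimal KKT multipliers for the Fisher-market program are all 1.**
With positive budgets `b i`, nonnegative prices `p`, and differentiable utilities `u i`
positively homogeneous of degree one, if allocations `X*` and multipliers `λ*` satisfy
the stationarity conditions `(b_i / u_i(x_i*)) ∂u_i/∂x_j(x_i*) = λ_i* p_j` together with
complementary slackness `λ_i* (b_i - x_i*·p) = 0`, then `λ_i* = 1` for all `i`. -/
theorem fisher_market_kkt_multipliers_eq_one {n m : ℕ}
    (b : Fin n → ℝ) (hb : ∀ i, 0 < b i)
    (p : EuclideanSpace ℝ (Fin m)) (hp : ∀ j, 0 ≤ p j)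
    (u : Fin n → EuclideanSpace ℝ (Fin m) → ℝ)
    (hu_diff : ∀ i, Differentiable ℝ (u i))
    (hu_hom : ∀ i, ∀ k : ℝ, 0 < k → ∀ z, u i (k • z) = k * u i z)
    (Xstar : Fin n → EuclideanSpace ℝ (Fin m)) (lam : Fin n → ℝ)
    (hu_ne : ∀ i, u i (Xstar i) ≠ 0)
    (hstat : ∀ i, ∀ j : Fin m,
      (b i / u i (Xstar i)) * fderiv ℝ (u i) (Xstar i) (EuclideanSpace.single j 1)
        = lam i * p j)
    (hcs : ∀ i, lam i * (b i - ∑ j, Xstar i j * p j) = 0) :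
    ∀ i, lam i = 1 := by
  intro i
  have hom : ∀ᶠ k : ℝ in 𝓝 1, u i (k • Xstar i) = k ^ (1 : ℝ) * u i (Xstar i) := by
    filter_upwards [eventually_gt_nhds one_pos] with k hk
    rw [Real.rpow_one, hu_hom i k hk]
  have stationarity : (b i / u i (Xstar i)) • fderiv ℝ (u i) (Xstar i) = lam i • innerSL ℝ p :=
    ContinuousLinearMap.coe_injective <| (EuclideanSpace.basisFun (Fin m) ℝ).toBasis.ext fun j ↦ by
      simpa [EuclideanSpace.inner_single_right] using hstat i j
  exact fisher_market_kkt_multipliers_eq_one_general (hb i).ne' (hu_diff i _).hasFDerivAt hom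
    (hu_ne i) stationarity (by simpa [PiLp.inner_apply] using hcs i)
end

section
/- (Example 1.1, non-convergence of simultaneous GDA.) Define sequences by x_0 = y_0 = 0, x_{t+1} = proj_{[−1,1]}(x_t − 2x_t), and y_{t+1} = proj_{{ y ∈ [−1,1] : y ≤ 1 − x_t }}(y_t + 1). Then (x_t, y_t) = (0, 1) for all t ≥ 1; moreover (0,1) is a fixed point of this update yet is not a Stackelberg equilibrium of the game min_{x ∈ [−1,1]} max{ x² + y + 1 : y ∈ [−1,1], 1 − (x + y) ≥ 0 }, since f(0,1) = 2 > 7/4 = inf_{x∈[−1,1]} sup{ x² + y + 1 : y ∈ [−1,1], y ≤ 1 − x }. -/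
/-!
The `x`-update of GDA sees only `∂f/∂x = 2x`, which vanishes at `x = 0`, so the iterates stay on
the line `x = 0` while `y` climbs to `1`. The update ignores that increasing `x` shrinks the
feasible interval of `y`: for `x ≥ 0` the best response is `1 - x`, with payoff
`x² - x + 2 = (x - 1/2)² + 7/4`, so moving to `x = 1/2` lowers the value from `2` to `7/4`.
-/

open Set Function

theorem isGreatest_values_of_monotoneOn {α β : Type*} [LinearOrder α] [Preorder β] {a b c : α}
    {f : α → β} (hab : a ≤ b) (hac : a ≤ c) (hf : MonotoneOn f (Icc a b)) :
    IsGreatest {w | ∃ y ∈ Icc a b, y ≤ c ∧ w = f y} (f (min b c)) := by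
  have hmem : min b c ∈ Icc a b := ⟨le_min hab hac, min_le_left b c⟩
  refine ⟨⟨min b c, hmem, min_le_right b c, rfl⟩, ?_⟩
  rintro _ ⟨y, hy, hyc, rfl⟩
  exact hf hy hmem (le_min hy.2 hyc)

/-- One simultaneous GDA update of `(x, y)` for `f(x, y) = x² + y + 1` with unit step size. The
projection onto the feasible `y` is the clamp to `[-1, min 1 (1 - x)]`, nonempty for `x ≤ 2`. -/
noncomputable def gdaStep (p : ℝ × ℝ) : ℝ × ℝ :=
  (max (-1) (min 1 (p.1 - 2 * p.1)), max (-1) (min (min 1 (1 - p.1)) (p.2 + 1)))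

/-- The marginal function of the game: the supremum of the payoff `x² + y + 1` over the responses
`y ∈ [-1, 1]` that are feasible for `x`. -/
noncomputable def maxPayoff (x : ℝ) : ℝ :=
  sSup {w : ℝ | ∃ y ∈ Icc (-1 : ℝ) 1, y ≤ 1 - x ∧ w = x ^ 2 + y + 1}

theorem gdaStep_zero_of_nonneg {y : ℝ} (hy : 0 ≤ y) : gdaStep (0, y) = (0, 1) := by
  have hclamp : min 1 (y + 1) = 1 := min_eq_left (le_add_of_nonneg_left hy)
  norm_num [gdaStep, hclamp]

theorem isFixedPt_gdaStep_zero_one : IsFixedPt gdaStep (0, 1) :=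
  gdaStep_zero_of_nonneg zero_le_one

theorem iterate_gdaStep_zero_of_nonneg {y : ℝ} (hy : 0 ≤ y) (t : ℕ) :
    gdaStep^[t + 1] (0, y) = (0, 1) := by
  rw [iterate_succ_apply, gdaStep_zero_of_nonneg hy]
  exact isFixedPt_gdaStep_zero_one.iterate t

theorem maxPayoff_eq {x : ℝ} (hx : x ≤ 2) : maxPayoff x = x ^ 2 + min 1 (1 - x) + 1 := by
  have hmono : Monotone fun y : ℝ => x ^ 2 + y + 1 := (monotone_id.const_add _).add_const 1
  exact (isGreatest_values_of_monotoneOn (by norm_num) (by linarith)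
    (hmono.monotoneOn _)).csSup_eq

theorem seven_div_four_le_sq_add_min_add_one (x : ℝ) : 7 / 4 ≤ x ^ 2 + min 1 (1 - x) + 1 := by
  rcases min_choice 1 (1 - x) with h | h <;> rw [h]
  · linarith [sq_nonneg x]
  · linarith [sq_nonneg (x - 1 / 2)]

theorem isLeast_maxPayoff :
    IsLeast {v : ℝ | ∃ x ∈ Icc (-1 : ℝ) 1, v = maxPayoff x} (7 / 4) := by
  constructor
  · refine ⟨1 / 2, by norm_num, ?_⟩
    rw [maxPayoff_eq (by norm_num)]
    norm_num
  · rintro _ ⟨x, hx, rfl⟩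
    rw [maxPayoff_eq (hx.2.trans one_le_two)]
    exact seven_div_four_le_sq_add_min_add_one x

/-- **Example 1.1: non-convergence of simultaneous GDA.**
With updates `x_{t+1} = proj_{[-1,1]}(x_t - 2x_t)` and
`y_{t+1} = proj_{{y ∈ [-1,1] : y ≤ 1 - x_t}}(y_t + 1)` started at `(0, 0)`, the iterates
equal `(0, 1)` for all `t ≥ 1`; moreover `(0, 1)` is a fixed point of the update, yet it
is not a Stackelberg equilibrium of
`min_{x ∈ [-1,1]} max {x² + y + 1 : y ∈ [-1,1], 1 - (x + y) ≥ 0}`, since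
`f(0, 1) = 2 > 7/4 = inf_{x ∈ [-1,1]} sup {x² + y + 1 : y ∈ [-1,1], y ≤ 1 - x}`.
(Here `proj_{[a,b]}(w) = max a (min b w)`.) -/
theorem example_1_1_gda_non_convergence (x y : ℕ → ℝ)
    (hx0 : x 0 = 0) (hy0 : y 0 = 0)
    (hxupd : ∀ t, x (t + 1) = max (-1) (min 1 (x t - 2 * x t)))
    (hyupd : ∀ t, y (t + 1) = max (-1) (min (min 1 (1 - x t)) (y t + 1))) :
    (∀ t, 1 ≤ t → x t = 0 ∧ y t = 1)
    ∧ (max (-1 : ℝ) (min 1 ((0 : ℝ) - 2 * 0)) = 0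
        ∧ max (-1 : ℝ) (min (min 1 (1 - (0 : ℝ))) ((1 : ℝ) + 1)) = 1)
    ∧ ((0 : ℝ) ^ 2 + 1 + 1 = 2)
    ∧ (sInf {v : ℝ | ∃ x' ∈ Set.Icc (-1 : ℝ) 1,
        v = sSup {w : ℝ | ∃ y' ∈ Set.Icc (-1 : ℝ) 1, y' ≤ 1 - x' ∧ w = x' ^ 2 + y' + 1}}
          = 7 / 4)
    ∧ ¬ ((0 : ℝ) ^ 2 + 1 + 1 ≤ sInf {v : ℝ | ∃ x' ∈ Set.Icc (-1 : ℝ) 1,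
        v = sSup {w : ℝ | ∃ y' ∈ Set.Icc (-1 : ℝ) 1, y' ≤ 1 - x' ∧ w = x' ^ 2 + y' + 1}}) := by
  have hiter (t : ℕ) : (x t, y t) = gdaStep^[t] (0, 0) := by
    induction t with
    | zero => rw [hx0, hy0, iterate_zero_apply]
    | succ t ih =>
      rw [iterate_succ_apply', ← ih]
      exact Prod.ext (hxupd t) (hyupd t)
  refine ⟨fun t ht => ?_, Prod.ext_iff.mp isFixedPt_gdaStep_zero_one, by norm_num,
    isLeast_maxPayoff.csInf_eq, not_le.mpr (isLeast_maxPayoff.csInf_eq.trans_lt (by norm_num))⟩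
  obtain ⟨s, rfl⟩ := Nat.exists_eq_add_of_le' ht
  exact Prod.ext_iff.mp ((hiter (s + 1)).trans (iterate_gdaStep_zero_of_nonneg le_rfl s))
end

section
/- (Example 4.1, LGDA cycles but its average iterates equal the Stackelberg equilibrium.) For the game min_{x ∈ [−1,1]} max{ x² − y² + 1 : y ∈ [−1,1], 1 − (x + y) ≥ 0 }, the Lagrangian with the optimal multiplier λ* = 0 is L(x,y,0) = x² − y² + 1, and Lagrangian GDA with unit step sizes gives the update x_{t+1} = proj_{[−1,1]}(x_t − 2x_t), y_{t+1} = proj_{[−1,1]}(y_t − 2y_t). Started from (x_0, y_0) = (1, 1), the iterates satisfy (x_t, y_t) = ((−1)^t, (−1)^t) for all t ≥ 0, so they cycle with period 2 and do not converge; yet for every k ≥ 1 the average over an even number of iterates satisfies (1/(2k)) Σ_{t=1}^{2k} (x_t, y_t) = (0, 0), which is the Stackelberg equilibrium of the game. -/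
/-!
On `[-1, 1]` the projection does nothing to `u - 2u = -u`, so each coordinate only changes sign at
every step.  A sign-alternating sequence is `2`-periodic, and a convergent periodic sequence is
constant, so it diverges; consecutive terms cancel, so sums over an even number of steps vanish.
The point `(0, 0)` is a saddle point of `x² - y² + 1`, and the follower's action `0` is feasible
against every `x ≤ 1`; hence every leader action has value at least that of the saddle point.
-/

open Filter Function Set
open scoped Topology

section PeriodicSequences

theorem eq_of_periodic_of_tendsto {X : Type*} [TopologicalSpace X] [T2Space X] {u : ℕ → X}
    {c : ℕ} {l : X} (hu : Periodic u c) (hc : 0 < c) (hl : Tendsto u atTop (𝓝 l)) (t : ℕ) :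
    u t = l := by
  have hsub : Tendsto (fun n : ℕ => t + n * c) atTop atTop :=
    tendsto_atTop_mono (fun n => le_add_left (Nat.le_mul_of_pos_right n hc)) tendsto_id
  have hconst : ∀ n, u (t + n * c) = u t := fun n => hu.nat_mul n t
  have hlim : Tendsto (fun _ : ℕ => u t) atTop (𝓝 l) := by
    simpa only [comp_def, hconst] using hl.comp hsub
  exact tendsto_nhds_unique tendsto_const_nhds hlim

theorem sum_Ioc_eq_zero_of_antiperiodic {M : Type*} [AddCommGroup M] {u : ℕ → M} {c : ℕ}
    (hu : Antiperiodic u c) (m k : ℕ) : ∑ t ∈ Finset.Ioc m (m + k * (2 * c)), u t = 0 := by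
  induction k with
  | zero => simp
  | succ k ih =>
    set n := m + k * (2 * c)
    have hhalf : ∑ t ∈ Finset.Ioc (n + c) (n + c + c), u t = -∑ t ∈ Finset.Ioc n (n + c), u t := by
      rw [← Finset.map_add_right_Ioc, hu.sum_map_addRightEmbedding]
    calc ∑ t ∈ Finset.Ioc m (m + (k + 1) * (2 * c)), u t
        = ∑ t ∈ Finset.Ioc m (n + c + c), u t := by congr 2; lia
      _ = ∑ t ∈ Finset.Ioc m n, u t + ∑ t ∈ Finset.Ioc n (n + c), u t
            + ∑ t ∈ Finset.Ioc (n + c) (n + c + c), u t := by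
          rw [Finset.sum_Ioc_consecutive _ (by lia) (by lia),
            Finset.sum_Ioc_consecutive _ (by lia) (by lia)]
      _ = 0 := by rw [ih, hhalf, zero_add, add_neg_cancel]

theorem sum_Icc_one_two_mul_eq_zero_of_antiperiodic {M : Type*} [AddCommGroup M] {u : ℕ → M}
    (hu : Antiperiodic u 1) (k : ℕ) : ∑ t ∈ Finset.Icc 1 (2 * k), u t = 0 := by
  simpa only [← Finset.Icc_add_one_left_eq_Ioc, zero_add, mul_one, mul_comm k]
    using sum_Ioc_eq_zero_of_antiperiodic hu 0 k

theorem eq_neg_one_pow_mul_of_antiperiodic {R : Type*} [Ring R] {u : ℕ → R}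
    (hu : Antiperiodic u 1) (t : ℕ) : u t = (-1) ^ t * u 0 := by
  simpa using hu.add_nsmul_eq (x := 0) t

end PeriodicSequences

section ProjectedStep

variable {R : Type*} [CommRing R] [LinearOrder R] [IsStrictOrderedRing R] {r : R}

theorem max_min_sub_two_mul_eq_neg {a : R} (ha : |a| ≤ r) :
    max (-r) (min r (a - 2 * a)) = -a := by
  obtain ⟨hlower, hupper⟩ := abs_le.mp ha
  rw [show a - 2 * a = -a by ring, min_eq_right (neg_le.mp hlower),
    max_eq_right (neg_le_neg hupper)]

theorem antiperiodic_one_of_projected_step {u : ℕ → R} (h0 : |u 0| ≤ r)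
    (hstep : ∀ t, u (t + 1) = max (-r) (min r (u t - 2 * u t))) : Antiperiodic u 1 := by
  have hbound : ∀ t, |u t| ≤ r := by
    intro t
    induction t with
    | zero => exact h0
    | succ t ih => rwa [hstep, max_min_sub_two_mul_eq_neg ih, abs_neg]
  exact fun t => (hstep t).trans (max_min_sub_two_mul_eq_neg (hbound t))

end ProjectedStep

section StackelbergGames

variable {α β : Type*}

/-- The payoffs `f x y` attainable by a follower who answers the leader's action `x` with some
`y ∈ Y` satisfying the coupled constraint `g x y ≥ 0`. -/
def followerPayoffs (Y : Set β) (f g : α → β → ℝ) (x : α) : Set ℝ :=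
  {w | ∃ y ∈ Y, 0 ≤ g x y ∧ w = f x y}

/-- The pair `(a, b)` is a Stackelberg equilibrium of the min-max game
`min_{x ∈ X} max {f x y : y ∈ Y, g x y ≥ 0}`: it is feasible, `b` is a best response to `a`, and
no leader action has a smaller value.  Suprema and infima are taken in `ℝ`, where those of empty or
unbounded sets are `0`, so the notion is meaningful only when the payoff sets are neither. -/
def IsStackelbergEquilibrium (X : Set α) (Y : Set β) (f g : α → β → ℝ) (a : α) (b : β) : Prop :=
  a ∈ X ∧ b ∈ Y ∧ 0 ≤ g a b ∧ sSup (followerPayoffs Y f g a) ≤ f a b ∧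
    f a b ≤ sInf {v | ∃ x ∈ X, v = sSup (followerPayoffs Y f g x)}

theorem IsStackelbergEquilibrium.of_isSaddlePointOn {X : Set α} {Y : Set β} {f g : α → β → ℝ}
    {a : α} {b : β} (ha : a ∈ X) (hb : b ∈ Y) (hfeas : ∀ x ∈ X, 0 ≤ g x b)
    (hbdd : ∀ x ∈ X, BddAbove (followerPayoffs Y f g x)) (hsaddle : IsSaddlePointOn X Y f a b) :
    IsStackelbergEquilibrium X Y f g a b := by
  have hmem : ∀ x ∈ X, f x b ∈ followerPayoffs Y f g x := fun x hx => ⟨b, hb, hfeas x hx, rfl⟩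
  refine ⟨ha, hb, hfeas a ha, csSup_le ⟨_, hmem a ha⟩ ?_, le_csInf ⟨_, a, ha, rfl⟩ ?_⟩
  · rintro _ ⟨y, hy, -, rfl⟩
    exact hsaddle a ha y hy
  · rintro _ ⟨x, hx, rfl⟩
    exact (hsaddle x hx b hb).trans (le_csSup (hbdd x hx) (hmem x hx))

theorem isSaddlePointOn_sq_sub_sq_add (X Y : Set ℝ) (c : ℝ) :
    IsSaddlePointOn X Y (fun x y => x ^ 2 - y ^ 2 + c) 0 0 := by
  intro x _ y _
  linarith [sq_nonneg x, sq_nonneg y]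

theorem bddAbove_followerPayoffs_sq_sub_sq_add (Y : Set ℝ) (g : ℝ → ℝ → ℝ) (c x : ℝ) :
    BddAbove (followerPayoffs Y (fun x y => x ^ 2 - y ^ 2 + c) g x) := by
  refine ⟨x ^ 2 + c, ?_⟩
  rintro _ ⟨y, -, -, rfl⟩
  linarith [sq_nonneg y]

theorem isStackelbergEquilibrium_sq_sub_sq_add {X Y : Set ℝ} {g : ℝ → ℝ → ℝ} (hX : 0 ∈ X)
    (hY : 0 ∈ Y) (hfeas : ∀ x ∈ X, 0 ≤ g x 0) (c : ℝ) :
    IsStackelbergEquilibrium X Y (fun x y => x ^ 2 - y ^ 2 + c) g 0 0 :=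
  .of_isSaddlePointOn hX hY hfeas
    (fun x _ => bddAbove_followerPayoffs_sq_sub_sq_add Y g c x)
    (isSaddlePointOn_sq_sub_sq_add X Y c)

end StackelbergGames

/-- **Example 4.1: LGDA cycles, but its average iterates equal the Stackelberg
equilibrium.**  For the game
`min_{x ∈ [-1,1]} max {x² - y² + 1 : y ∈ [-1,1], 1 - (x + y) ≥ 0}`, the Lagrangian with
the optimal multiplier `λ* = 0` is `L(x, y, 0) = x² - y² + 1`, and Lagrangian GDA with
unit step sizes gives `x_{t+1} = proj_{[-1,1]}(x_t - 2x_t)`,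
`y_{t+1} = proj_{[-1,1]}(y_t - 2y_t)`.  Started from `(1, 1)`, the iterates satisfy
`(x_t, y_t) = ((-1)^t, (-1)^t)`, so they cycle with period 2 and do not converge; yet for
every `k ≥ 1` the average over an even number of iterates,
`(1/(2k)) ∑_{t=1}^{2k} (x_t, y_t)`, equals `(0, 0)`, which is the Stackelberg equilibrium
of the game. -/
theorem example_4_1_lgda_cycles_average_converges (x y : ℕ → ℝ)
    (hx0 : x 0 = 1) (hy0 : y 0 = 1)
    (hxupd : ∀ t, x (t + 1) = max (-1) (min 1 (x t - 2 * x t)))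
    (hyupd : ∀ t, y (t + 1) = max (-1) (min 1 (y t - 2 * y t))) :
    -- the Lagrangian with λ* = 0 is x² - y² + 1
    (∀ x' y' : ℝ, x' ^ 2 - y' ^ 2 + 1 + 0 * (1 - (x' + y')) = x' ^ 2 - y' ^ 2 + 1)
    -- explicit form of the iterates
    ∧ (∀ t, x t = (-1 : ℝ) ^ t ∧ y t = (-1 : ℝ) ^ t)
    -- the iterates cycle with period 2 and do not converge
    ∧ (∀ t, x (t + 2) = x t ∧ y (t + 2) = y t)
    ∧ (∀ t, x (t + 1) ≠ x t)
    ∧ (¬ ∃ l : ℝ × ℝ, Filter.Tendsto (fun t => (x t, y t)) Filter.atTop (nhds l))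
    -- averages over an even number of iterates are (0, 0)
    ∧ (∀ k : ℕ, 1 ≤ k →
        (1 / (2 * k : ℝ)) * ∑ t ∈ Finset.Icc 1 (2 * k), x t = 0
        ∧ (1 / (2 * k : ℝ)) * ∑ t ∈ Finset.Icc 1 (2 * k), y t = 0)
    -- (0, 0) is a Stackelberg equilibrium of the game
    ∧ ((0 : ℝ) ∈ Set.Icc (-1 : ℝ) 1 ∧ (0 : ℝ) ∈ Set.Icc (-1 : ℝ) 1
        ∧ 0 ≤ 1 - ((0 : ℝ) + (0 : ℝ))
        ∧ sSup {w : ℝ | ∃ y' ∈ Set.Icc (-1 : ℝ) 1, 0 ≤ 1 - ((0 : ℝ) + y')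
            ∧ w = (0 : ℝ) ^ 2 - y' ^ 2 + 1} ≤ (0 : ℝ) ^ 2 - (0 : ℝ) ^ 2 + 1
        ∧ (0 : ℝ) ^ 2 - (0 : ℝ) ^ 2 + 1 ≤ sInf {v : ℝ | ∃ x' ∈ Set.Icc (-1 : ℝ) 1,
            v = sSup {w : ℝ | ∃ y' ∈ Set.Icc (-1 : ℝ) 1, 0 ≤ 1 - (x' + y')
              ∧ w = x' ^ 2 - y' ^ 2 + 1}}) := by
  have hx : Antiperiodic x 1 := antiperiodic_one_of_projected_step (by simp [hx0]) hxupd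
  have hy : Antiperiodic y 1 := antiperiodic_one_of_projected_step (by simp [hy0]) hyupd
  have hx_pow (t : ℕ) : x t = (-1) ^ t := by
    simpa only [hx0, mul_one] using eq_neg_one_pow_mul_of_antiperiodic hx t
  have hy_pow (t : ℕ) : y t = (-1) ^ t := by
    simpa only [hy0, mul_one] using eq_neg_one_pow_mul_of_antiperiodic hy t
  have hequilibrium : IsStackelbergEquilibrium (Icc (-1) 1) (Icc (-1) 1)
      (fun x' y' : ℝ => x' ^ 2 - y' ^ 2 + 1) (fun x' y' => 1 - (x' + y')) 0 0 :=
    isStackelbergEquilibrium_sq_sub_sq_add (by norm_num) (by norm_num)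
      (fun x' hx' => by linarith [hx'.2]) 1
  refine ⟨fun _ _ => by ring, fun t => ⟨hx_pow t, hy_pow t⟩,
    fun t => ⟨hx.periodic_two_mul t, hy.periodic_two_mul t⟩, fun t => ?_, ?_,
    fun k _ => ?_, hequilibrium⟩
  · rw [hx t, hx_pow t]
    exact neg_ne_self.mpr (by simp)
  · rintro ⟨l, hl⟩
    have hconst := eq_of_periodic_of_tendsto hx.periodic_two_mul two_pos hl.fst_nhds
    linarith [hconst 0, hconst 1, hx 0]
  · simp only [sum_Icc_one_two_mul_eq_zero_of_antiperiodic hx,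
      sum_Icc_one_two_mul_eq_zero_of_antiperiodic hy, mul_zero, and_self]
end
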